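/- There exists a constant C > 0 depending only on Ω, a, b and c such that for every number of elements N and every equidistributing mesh (equidistributing the adaptation function ρ computed from its own finite element solution u_h), the linear finite element error satisfies ‖(u − u_h)'‖_Ω ≤ C √α_h / N. -/

import Mathlib

/-!
Setting of Huang–He, "Error analysis for equidistributing meshes":
the boundary value problem  −(a u')' + b u' + c u = f on Ω = (0,1), u(0)=u(1)=0,
its linear finite element discretization on a mesh 0 = x₀ < ⋯ < x_N = 1,
and the residual-based equidistribution quantities.
-/

noncomputable section
open MeasureTheory Real

namespace EquidMesh

/-- L² norm on (0,1). -/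
def L2 (g : ℝ → ℝ) : ℝ := Real.sqrt (∫ t in (0:ℝ)..1, (g t)^2)

/-- L¹ norm on (0,1). -/
def L1 (g : ℝ → ℝ) : ℝ := ∫ t in (0:ℝ)..1, |g t|

/-- The L^{2/3} quasi-norm on (0,1): (∫₀¹ |g|^{2/3})^{3/2}. -/
def Lp23 (g : ℝ → ℝ) : ℝ := (∫ t in (0:ℝ)..1, |g t| ^ ((2:ℝ)/3)) ^ ((3:ℝ)/2)

/-- L^∞ norm (essential supremum of |g|) on (0,1). -/
def Linf (g : ℝ → ℝ) : ℝ := essSup (fun t => |g t|) (volume.restrict (Set.Ioo (0:ℝ) 1))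

/-- Membership in L²(0,1). -/
def MemL2 (g : ℝ → ℝ) : Prop :=
  Measurable g ∧ IntervalIntegrable (fun t => (g t)^2) volume 0 1

/-- Membership in L^∞(0,1). -/
def MemLinf (g : ℝ → ℝ) : Prop :=
  Measurable g ∧ ∃ M : ℝ, ∀ᵐ x ∂(volume.restrict (Set.Ioo (0:ℝ) 1)), |g x| ≤ M

/-- `g` is absolutely continuous on [0,1] with derivative `g' ∈ L¹(0,1)`. -/
def HasL1Deriv (g g' : ℝ → ℝ) : Prop :=
  Measurable g' ∧ IntervalIntegrable g' volume 0 1 ∧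
    ∀ x ∈ Set.Icc (0:ℝ) 1, g x = g 0 + ∫ t in (0:ℝ)..x, g' t

/-- A function in H¹(0,1): absolutely continuous on [0,1], carried together with its
(a.e.) derivative, which lies in L²(0,1). -/
structure H1 where
  val : ℝ → ℝ
  dval : ℝ → ℝ
  dval_meas : Measurable dval
  dval_int : IntervalIntegrable dval volume 0 1
  dval_sq_int : IntervalIntegrable (fun t => (dval t)^2) volume 0 1
  ftc : ∀ x ∈ Set.Icc (0:ℝ) 1, val x = val 0 + ∫ t in (0:ℝ)..x, dval t

/-- `u ∈ H²(0,1)`: the derivative `u'` is absolutely continuous with `u'' ∈ L²(0,1)`. -/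
def H1.IsH2 (u : H1) : Prop :=
  ∃ u'' : ℝ → ℝ, Measurable u'' ∧ IntervalIntegrable u'' volume 0 1 ∧
    IntervalIntegrable (fun t => (u'' t)^2) volume 0 1 ∧
    ∀ x ∈ Set.Icc (0:ℝ) 1, u.dval x = u.dval 0 + ∫ t in (0:ℝ)..x, u'' t

/-- The coefficients of the elliptic problem on Ω = (0,1):
`a, b ∈ W^{1,∞}(Ω)`, `c ∈ L^∞(Ω)`, `a ≥ a₀ > 0`, and `c − b'/2 ≥ 0` a.e. -/
structure Coeffs where
  a : ℝ → ℝ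
  b : ℝ → ℝ
  c : ℝ → ℝ
  a' : ℝ → ℝ
  b' : ℝ → ℝ
  a0 : ℝ
  a0_pos : 0 < a0
  a_lb : ∀ x ∈ Set.Icc (0:ℝ) 1, a0 ≤ a x
  a'_meas : Measurable a'
  b'_meas : Measurable b'
  c_meas : Measurable c
  a'_int : IntervalIntegrable a' volume 0 1
  b'_int : IntervalIntegrable b' volume 0 1
  a'_bdd : ∃ M : ℝ, ∀ᵐ x ∂(volume.restrict (Set.Ioo (0:ℝ) 1)), |a' x| ≤ M
  b'_bdd : ∃ M : ℝ, ∀ᵐ x ∂(volume.restrict (Set.Ioo (0:ℝ) 1)), |b' x| ≤ M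
  c_bdd : ∃ M : ℝ, ∀ᵐ x ∂(volume.restrict (Set.Ioo (0:ℝ) 1)), |c x| ≤ M
  ftc_a : ∀ x ∈ Set.Icc (0:ℝ) 1, a x = a 0 + ∫ t in (0:ℝ)..x, a' t
  ftc_b : ∀ x ∈ Set.Icc (0:ℝ) 1, b x = b 0 + ∫ t in (0:ℝ)..x, b' t
  cb_nonneg : ∀ᵐ x ∂(volume.restrict (Set.Ioo (0:ℝ) 1)), 0 ≤ c x - b' x / 2

/-- The bilinear form B(u,v) = ∫₀¹ (a u' v' + b u' v + c u v) dx. -/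
def Coeffs.B (P : Coeffs) (u v : H1) : ℝ :=
  ∫ t in (0:ℝ)..1,
    (P.a t * u.dval t * v.dval t + P.b t * u.dval t * v.val t + P.c t * u.val t * v.val t)

/-- The right-hand side functional (f, v) = ∫₀¹ f v dx. -/
def ip (f : ℝ → ℝ) (v : H1) : ℝ := ∫ t in (0:ℝ)..1, f t * v.val t

/-- `u ∈ H¹₀(Ω)` is the weak solution: B(u,v) = (f,v) for all v ∈ H¹₀(Ω). -/
def Coeffs.IsWeakSolution (P : Coeffs) (f : ℝ → ℝ) (u : H1) : Prop :=
  u.val 0 = 0 ∧ u.val 1 = 0 ∧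
    ∀ v : H1, v.val 0 = 0 → v.val 1 = 0 → P.B u v = ip f v

/-- A mesh of N elements of Ω = (0,1): 0 = x₀ < x₁ < ⋯ < x_N = 1. -/
structure Mesh (N : ℕ) where
  x : ℕ → ℝ
  x_zero : x 0 = 0
  x_last : x N = 1
  x_mono : ∀ i < N, x i < x (i+1)

/-- Element length (the element of index `i` is `(x i, x (i+1))`, `0 ≤ i < N`). -/
def Mesh.h {N : ℕ} (m : Mesh N) (i : ℕ) : ℝ := m.x (i+1) - m.x i

/-- `v` is piecewise linear with respect to the mesh: its derivative is constant
inside each element. -/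
def Mesh.IsPL {N : ℕ} (m : Mesh N) (v : H1) : Prop :=
  ∀ i < N, ∃ s : ℝ, ∀ t ∈ Set.Ioo (m.x i) (m.x (i+1)), v.dval t = s

/-- `uh` is the linear finite element solution on the mesh `m`:
a continuous piecewise linear function vanishing at 0 and 1 with
B(u_h, v_h) = (f, v_h) for all piecewise linear v_h vanishing at 0 and 1. -/
def Coeffs.IsFESolution (P : Coeffs) (f : ℝ → ℝ) {N : ℕ} (m : Mesh N) (uh : H1) : Prop :=
  uh.val 0 = 0 ∧ uh.val 1 = 0 ∧ m.IsPL uh ∧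
    ∀ v : H1, v.val 0 = 0 → v.val 1 = 0 → m.IsPL v → P.B uh v = ip f v

/-- The residual of `w`: r = f + a' w' − b w' − c w. -/
def Coeffs.res (P : Coeffs) (f : ℝ → ℝ) (w : H1) : ℝ → ℝ :=
  fun t => f t + P.a' t * w.dval t - P.b t * w.dval t - P.c t * w.val t

/-- The element L² average ⟨g⟩_i = (h_i⁻¹ ∫_{K_i} g²)^{1/2}. -/
def Mesh.avg {N : ℕ} (m : Mesh N) (g : ℝ → ℝ) (i : ℕ) : ℝ :=
  Real.sqrt ((1 / m.h i) * ∫ t in (m.x i)..(m.x (i+1)), (g t)^2)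

/-- The intensity parameter α_h = (Σ_i h_i ⟨g⟩_i^{2/3})³. -/
def Mesh.alpha {N : ℕ} (m : Mesh N) (g : ℝ → ℝ) : ℝ :=
  (∑ i ∈ Finset.range N, m.h i * (m.avg g i) ^ ((2:ℝ)/3)) ^ 3

/-- The adaptation function value ρ_i = (1 + α_h⁻¹ ⟨g⟩_i²)^{1/3}. -/
def Mesh.rho {N : ℕ} (m : Mesh N) (g : ℝ → ℝ) (i : ℕ) : ℝ :=
  (1 + (m.alpha g)⁻¹ * (m.avg g i)^2) ^ ((1:ℝ)/3)

/-- σ_h = Σ_i ρ_i h_i. -/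
def Mesh.sigma {N : ℕ} (m : Mesh N) (g : ℝ → ℝ) : ℝ :=
  ∑ i ∈ Finset.range N, m.rho g i * m.h i

/-- The mesh equidistributes (the piecewise constant adaptation function built from) `g`:
ρ_i h_i = σ_h / N for all elements. -/
def Mesh.IsEquidistributing {N : ℕ} (m : Mesh N) (g : ℝ → ℝ) : Prop :=
  ∀ i < N, m.rho g i * m.h i = m.sigma g / (N:ℝ)

/-- Membership in the mesh set S_N: 1/(ρ₀ N) ≤ h_i ≤ 2/N for all i. -/
def Mesh.InS {N : ℕ} (m : Mesh N) (ρ0 : ℝ) : Prop :=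
  ∀ i < N, 1 / (ρ0 * (N:ℝ)) ≤ m.h i ∧ m.h i ≤ 2 / (N:ℝ)

/-- The maximum norm distance ‖X − X̃‖_∞ between two meshes with the same N. -/
def meshDist {N : ℕ} (m m' : Mesh N) : ℝ :=
  (Finset.range (N+1)).sup' (Finset.nonempty_range_iff.mpr (Nat.succ_ne_zero N))
    (fun i => |m.x i - m'.x i|)

/-- The energy norm squared ‖v‖_E² = ∫₀¹ (a v'² + (c − b'/2) v²) dx. -/
def Coeffs.energySq (P : Coeffs) (v : H1) : ℝ :=
  ∫ t in (0:ℝ)..1, (P.a t * (v.dval t)^2 + (P.c t - P.b' t / 2) * (v.val t)^2)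


/-- `g` is the primitive on `[0,1]` of an integrable function `g'`. -/
def IsPrimitive (g g' : ℝ → ℝ) : Prop :=
  IntervalIntegrable g' volume 0 1 ∧ ∀ x ∈ Set.Icc (0:ℝ) 1, g x = g 0 + ∫ t in (0:ℝ)..x, g' t

lemma intervalIntegrable_of_subinterval {g : ℝ → ℝ} (hg : IntervalIntegrable g volume 0 1)
    {p q : ℝ} (hp : p ∈ Set.Icc (0:ℝ) 1) (hq : q ∈ Set.Icc (0:ℝ) 1) :
    IntervalIntegrable g volume p q := by
  refine hg.mono_set (Set.uIcc_subset_uIcc ?_ ?_) <;> rwa [Set.uIcc_of_le zero_le_one]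

namespace IsPrimitive

variable {f f' g g' : ℝ → ℝ}

lemma integral_eq (hg : IsPrimitive g g') {p q : ℝ} (hp : p ∈ Set.Icc (0:ℝ) 1)
    (hq : q ∈ Set.Icc (0:ℝ) 1) : ∫ t in p..q, g' t = g q - g p := by
  have h0 : (0:ℝ) ∈ Set.Icc (0:ℝ) 1 := ⟨le_rfl, zero_le_one⟩
  rw [hg.2 q hq, hg.2 p hp, ← intervalIntegral.integral_interval_sub_left
    (intervalIntegrable_of_subinterval hg.1 h0 hq) (intervalIntegrable_of_subinterval hg.1 h0 hp)]
  ring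

lemma absolutelyContinuousOnInterval (hg : IsPrimitive g g') :
    AbsolutelyContinuousOnInterval (fun x => g 0 + ∫ t in (0:ℝ)..x, g' t) 0 1 :=
  (contDiffOn_const (n := 1)).absolutelyContinuousOnInterval.fun_add
    (hg.1.absolutelyContinuousOnInterval_intervalIntegral Set.left_mem_uIcc)

lemma continuousOn (hg : IsPrimitive g g') : ContinuousOn g (Set.Icc 0 1) := by
  have h := hg.absolutelyContinuousOnInterval.continuousOn
  rw [Set.uIcc_of_le zero_le_one] at h
  exact h.congr fun x hx => hg.2 x hx

lemma sub (hf : IsPrimitive f f') (hg : IsPrimitive g g') :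
    IsPrimitive (fun x => f x - g x) (fun x => f' x - g' x) := by
  have h0 : (0:ℝ) ∈ Set.Icc (0:ℝ) 1 := ⟨le_rfl, zero_le_one⟩
  refine ⟨hf.1.sub hg.1, fun x hx => ?_⟩
  rw [intervalIntegral.integral_sub (intervalIntegrable_of_subinterval hf.1 h0 hx)
    (intervalIntegrable_of_subinterval hg.1 h0 hx), hf.integral_eq h0 hx, hg.integral_eq h0 hx]
  ring

lemma mul (hf : IsPrimitive f f') (hg : IsPrimitive g g') :
    IsPrimitive (fun x => f x * g x) (fun x => f' x * g x + f x * g' x) := by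
  have huIcc : Set.uIcc (0:ℝ) 1 = Set.Icc 0 1 := Set.uIcc_of_le zero_le_one
  refine ⟨(hf.1.mul_continuousOn (huIcc ▸ hg.continuousOn)).add
    (hg.1.continuousOn_mul (huIcc ▸ hf.continuousOn)), fun x hx => ?_⟩
  have hsub : Set.uIcc (0:ℝ) x ⊆ Set.uIcc 0 1 := by
    rw [Set.uIcc_of_le hx.1, huIcc]
    exact Set.Icc_subset_Icc le_rfl hx.2
  have key := (hf.absolutelyContinuousOnInterval.mono hsub).integral_deriv_mul_eq_sub
    (hg.absolutelyContinuousOnInterval.mono hsub)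
  rw [← hf.2 x hx, ← hg.2 x hx] at key
  simp only [intervalIntegral.integral_same, add_zero] at key
  rw [← sub_eq_iff_eq_add', ← key]
  apply intervalIntegral.integral_congr_ae
  filter_upwards [hf.1.ae_hasDerivAt_integral, hg.1.ae_hasDerivAt_integral] with t hft hgt ht
  have ht' : t ∈ Set.uIcc (0:ℝ) 1 := hsub (Set.uIoc_subset_uIcc ht)
  have htI : t ∈ Set.Icc (0:ℝ) 1 := huIcc ▸ ht'
  rw [((hft ht' 0 Set.left_mem_uIcc).const_add (f 0)).deriv,
    ((hgt ht' 0 Set.left_mem_uIcc).const_add (g 0)).deriv, ← hf.2 t htI, ← hg.2 t htI]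

end IsPrimitive

/-- The restriction of Lebesgue measure to `(0,1]`. -/
abbrev unitMeasure : Measure ℝ := volume.restrict (Set.Ioc 0 1)

lemma intervalIntegrable_iff_integrable {g : ℝ → ℝ} :
    IntervalIntegrable g volume 0 1 ↔ Integrable g unitMeasure :=
  intervalIntegrable_iff_integrableOn_Ioc_of_le zero_le_one

lemma memLp_two_of_sq {g : ℝ → ℝ} (hm : Measurable g)
    (hg : IntervalIntegrable (fun t => (g t)^2) volume 0 1) : MemLp g 2 unitMeasure :=
  (memLp_two_iff_integrable_sq hm.aestronglyMeasurable).2 (intervalIntegrable_iff_integrable.1 hg)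

lemma ae_unitMeasure_iff {p : ℝ → Prop} :
    (∀ᵐ x ∂(volume.restrict (Set.Ioo (0:ℝ) 1)), p x) ↔ ∀ᵐ x ∂unitMeasure, p x := by
  rw [unitMeasure, Measure.restrict_congr_set Ioo_ae_eq_Ioc]

lemma memLp_top_of_ae_le {g : ℝ → ℝ} (hm : Measurable g)
    (hg : ∃ M : ℝ, ∀ᵐ x ∂(volume.restrict (Set.Ioo (0:ℝ) 1)), |g x| ≤ M) :
    MemLp g ⊤ unitMeasure := by
  obtain ⟨M, hM⟩ := hg
  exact memLp_top_of_bound hm.aestronglyMeasurable M (ae_unitMeasure_iff.1 hM)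

lemma memLp_top_of_continuousOn {g : ℝ → ℝ} (hg : ContinuousOn g (Set.Icc 0 1)) :
    MemLp g ⊤ unitMeasure := by
  obtain ⟨M, hM⟩ := isCompact_Icc.exists_bound_of_continuousOn hg
  refine memLp_top_of_bound
    ((hg.mono Set.Ioc_subset_Icc_self).aestronglyMeasurable measurableSet_Ioc) M ?_
  filter_upwards [ae_restrict_mem measurableSet_Ioc] with x hx
  exact hM x (Set.Ioc_subset_Icc_self hx)

/-- The variance identity on an interval. -/
lemma integral_sub_mean_sq_eq {w : ℝ → ℝ} {p q : ℝ} (hpq : p < q)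
    (hw : IntervalIntegrable w volume p q)
    (hw2 : IntervalIntegrable (fun t => (w t)^2) volume p q) :
    ∫ t in p..q, (w t - (∫ s in p..q, w s) / (q - p))^2 =
      (∫ t in p..q, (w t)^2) - (∫ t in p..q, w t)^2 / (q - p) := by
  have hne : q - p ≠ 0 := (sub_pos.2 hpq).ne'
  set k := (∫ s in p..q, w s) / (q - p) with hk
  have hI : ∫ s in p..q, w s = k * (q - p) := by rw [hk]; field_simp
  have : ∀ t, (w t - k)^2 = (w t)^2 - 2 * k * w t + k^2 := fun t => by ring
  simp_rw [this]
  rw [intervalIntegral.integral_add (hw2.sub (hw.const_mul _)) intervalIntegrable_const,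
    intervalIntegral.integral_sub hw2 (hw.const_mul _), intervalIntegral.integral_const_mul,
    intervalIntegral.integral_const, hI, smul_eq_mul]
  field_simp
  ring

lemma sq_integral_le {w : ℝ → ℝ} {p q : ℝ} (hpq : p ≤ q)
    (hw : IntervalIntegrable w volume p q)
    (hw2 : IntervalIntegrable (fun t => (w t)^2) volume p q) :
    (∫ t in p..q, w t)^2 ≤ (q - p) * ∫ t in p..q, (w t)^2 := by
  rcases hpq.eq_or_lt with rfl | hlt
  · simp
  have h := integral_sub_mean_sq_eq hlt hw hw2
  have h0 : 0 ≤ ∫ t in p..q, (w t - (∫ s in p..q, w s) / (q - p))^2 :=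
    intervalIntegral.integral_nonneg hpq fun t _ => sq_nonneg _
  rw [h, sub_nonneg, div_le_iff₀ (sub_pos.2 hlt)] at h0
  linarith

/-- Poincaré's inequality on an interval for functions vanishing at the left end. -/
lemma IsPrimitive.integral_sq_le {v v' : ℝ → ℝ} (hv : IsPrimitive v v')
    (hv2 : IntervalIntegrable (fun t => (v' t)^2) volume 0 1) {p q : ℝ}
    (hp : p ∈ Set.Icc (0:ℝ) 1) (hq : q ∈ Set.Icc (0:ℝ) 1) (hpq : p ≤ q) (hvp : v p = 0) :
    ∫ t in p..q, (v t)^2 ≤ (q - p)^2 * ∫ t in p..q, (v' t)^2 := by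
  have hcont : ContinuousOn (fun t => (v t)^2) (Set.uIcc p q) := by
    rw [Set.uIcc_of_le hpq]
    exact (hv.continuousOn.mono (Set.Icc_subset_Icc hp.1 hq.2)).pow 2
  have hbound : ∀ t ∈ Set.Icc p q, (v t)^2 ≤ (q - p) * ∫ s in p..q, (v' s)^2 := by
    intro t ht
    have ht' : t ∈ Set.Icc (0:ℝ) 1 := ⟨hp.1.trans ht.1, ht.2.trans hq.2⟩
    have h1 := sq_integral_le ht.1 (intervalIntegrable_of_subinterval hv.1 hp ht')
      (intervalIntegrable_of_subinterval hv2 hp ht')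
    rw [hv.integral_eq hp ht', hvp, sub_zero] at h1
    have h2 : ∫ s in p..t, (v' s)^2 ≤ ∫ s in p..q, (v' s)^2 :=
      intervalIntegral.integral_mono_interval le_rfl ht.1 ht.2
        (Filter.Eventually.of_forall fun s => sq_nonneg _)
        (intervalIntegrable_of_subinterval hv2 hp hq)
    have h3 : 0 ≤ ∫ s in p..t, (v' s)^2 :=
      intervalIntegral.integral_nonneg ht.1 fun s _ => sq_nonneg _
    exact h1.trans (mul_le_mul (by linarith [ht.2]) h2 h3 (sub_nonneg.2 hpq))
  calc ∫ t in p..q, (v t)^2 ≤ ∫ _ in p..q, (q - p) * ∫ s in p..q, (v' s)^2 :=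
        intervalIntegral.integral_mono_on hpq hcont.intervalIntegrable
          intervalIntegrable_const hbound
    _ = _ := by rw [intervalIntegral.integral_const, smul_eq_mul]; ring

namespace Mesh

variable {N : ℕ} (m : Mesh N)

lemma x_le_x {i j : ℕ} (hij : i ≤ j) (hj : j ≤ N) : m.x i ≤ m.x j := by
  induction j, hij using Nat.le_induction with
  | base => exact le_rfl
  | succ k _ ih => exact (ih (by omega)).trans (m.x_mono k (by omega)).le

lemma x_mem {i : ℕ} (hi : i ≤ N) : m.x i ∈ Set.Icc (0:ℝ) 1 :=
  ⟨m.x_zero ▸ m.x_le_x (Nat.zero_le i) hi, m.x_last ▸ m.x_le_x hi le_rfl⟩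

lemma h_pos {i : ℕ} (hi : i < N) : 0 < m.h i := sub_pos.2 (m.x_mono i hi)

lemma pos {N : ℕ} (m : Mesh N) : 0 < N := by
  rcases Nat.eq_zero_or_pos N with rfl | h
  · exact absurd (m.x_zero.symm.trans m.x_last) zero_ne_one
  · exact h

lemma sum_h : ∑ i ∈ Finset.range N, m.h i = 1 := by
  simp only [h]
  rw [Finset.sum_range_sub, m.x_zero, m.x_last, sub_zero]

lemma sum_integral {g : ℝ → ℝ} (hg : IntervalIntegrable g volume 0 1) :
    ∑ i ∈ Finset.range N, ∫ t in (m.x i)..(m.x (i+1)), g t = ∫ t in (0:ℝ)..1, g t := by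
  rw [intervalIntegral.sum_integral_adjacent_intervals, m.x_zero, m.x_last]
  intro k hk
  exact intervalIntegrable_of_subinterval hg (m.x_mem hk.le) (m.x_mem hk)

lemma avg_nonneg (g : ℝ → ℝ) (i : ℕ) : 0 ≤ m.avg g i := Real.sqrt_nonneg _

lemma h_mul_avg_sq (g : ℝ → ℝ) {i : ℕ} (hi : i < N) :
    m.h i * (m.avg g i)^2 = ∫ t in (m.x i)..(m.x (i+1)), (g t)^2 := by
  have hpos := m.h_pos hi
  have h0 : 0 ≤ ∫ t in (m.x i)..(m.x (i+1)), (g t)^2 :=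
    intervalIntegral.integral_nonneg (m.x_mono i hi).le fun t _ => sq_nonneg _
  rw [avg, Real.sq_sqrt (by positivity)]
  field_simp

lemma rho_pow_three {g : ℝ → ℝ} (hα : 0 ≤ m.alpha g) (i : ℕ) :
    (m.rho g i)^3 = 1 + (m.alpha g)⁻¹ * (m.avg g i)^2 := by
  have : 0 ≤ (m.alpha g)⁻¹ * (m.avg g i)^2 := by positivity
  rw [rho, ← Real.rpow_natCast, ← Real.rpow_mul (by positivity)]
  norm_num

/-- The sum whose cube is the intensity parameter is nonnegative. -/
lemma alphaSum_nonneg (g : ℝ → ℝ) :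
    0 ≤ ∑ i ∈ Finset.range N, m.h i * (m.avg g i) ^ ((2:ℝ)/3) :=
  Finset.sum_nonneg fun i hi => mul_nonneg (m.h_pos (Finset.mem_range.1 hi)).le
    (Real.rpow_nonneg (m.avg_nonneg g i) _)

lemma alpha_nonneg (g : ℝ → ℝ) : 0 ≤ m.alpha g := pow_nonneg (m.alphaSum_nonneg g) 3

lemma sigma_le_two (g : ℝ → ℝ) : m.sigma g ≤ 2 := by
  set S := ∑ i ∈ Finset.range N, m.h i * (m.avg g i) ^ ((2:ℝ)/3) with hS
  have hS0 : 0 ≤ S := m.alphaSum_nonneg g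
  have hα : m.alpha g = S ^ 3 := rfl
  have hρ : ∀ i, m.rho g i ≤ 1 + S⁻¹ * (m.avg g i) ^ ((2:ℝ)/3) := by
    intro i
    have ha := m.avg_nonneg g i
    have key : ((m.alpha g)⁻¹ * (m.avg g i)^2) ^ ((1:ℝ)/3) =
        S⁻¹ * (m.avg g i) ^ ((2:ℝ)/3) := by
      rw [hα, ← inv_pow, Real.mul_rpow (by positivity) (by positivity),
        ← Real.rpow_natCast, ← Real.rpow_natCast, ← Real.rpow_mul (by positivity),
        ← Real.rpow_mul ha]
      norm_num
    calc m.rho g i ≤ (1:ℝ) ^ ((1:ℝ)/3) + ((m.alpha g)⁻¹ * (m.avg g i)^2) ^ ((1:ℝ)/3) :=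
          Real.rpow_add_le_add_rpow zero_le_one
            (mul_nonneg (inv_nonneg.2 (m.alpha_nonneg g)) (sq_nonneg _))
            (by norm_num) (by norm_num)
      _ = _ := by rw [key, Real.one_rpow]
  calc m.sigma g ≤ ∑ i ∈ Finset.range N,
        (m.h i + S⁻¹ * (m.h i * (m.avg g i) ^ ((2:ℝ)/3))) := by
        refine Finset.sum_le_sum fun i hi => ?_
        have := mul_le_mul_of_nonneg_right (hρ i) (m.h_pos (Finset.mem_range.1 hi)).le
        linarith
    _ = 1 + S⁻¹ * S := by rw [Finset.sum_add_distrib, m.sum_h, ← Finset.mul_sum]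
    _ ≤ 2 := by linarith [inv_mul_le_one (a := S)]

lemma avg_eq_zero_of_alpha_eq_zero {g : ℝ → ℝ} (hα : m.alpha g = 0) {i : ℕ} (hi : i < N) :
    m.avg g i = 0 := by
  have hS := pow_eq_zero_iff three_ne_zero |>.1 hα
  rw [Finset.sum_eq_zero_iff_of_nonneg fun j hj =>
    mul_nonneg (m.h_pos (Finset.mem_range.1 hj)).le (Real.rpow_nonneg (m.avg_nonneg g j) _)] at hS
  rcases mul_eq_zero.1 (hS i (Finset.mem_range.2 hi)) with h | h
  · exact absurd h (m.h_pos hi).ne'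
  · exact ((Real.rpow_eq_zero_iff_of_nonneg (m.avg_nonneg g i)).1 h).1

/-- On an equidistributing mesh the weighted residual estimator is of second order. -/
lemma IsEquidistributing.sum_le {m : Mesh N} {g : ℝ → ℝ} (hm : m.IsEquidistributing g) :
    ∑ i ∈ Finset.range N, (m.h i)^3 * (m.avg g i)^2 ≤ 8 * m.alpha g / (N:ℝ)^2 := by
  have hN : (0:ℝ) < N := Nat.cast_pos.2 m.pos
  rcases (m.alpha_nonneg g).eq_or_lt with hα | hα
  · rw [← hα, mul_zero, zero_div]
    refine (Finset.sum_eq_zero fun i hi => ?_).le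
    rw [m.avg_eq_zero_of_alpha_eq_zero hα.symm (Finset.mem_range.1 hi)]
    ring
  have hterm : ∀ i ∈ Finset.range N,
      (m.h i)^3 * (m.avg g i)^2 ≤ 8 * m.alpha g / (N:ℝ)^3 := by
    intro i hi
    have hi := Finset.mem_range.1 hi
    have hh := m.h_pos hi
    have h1 : (m.avg g i)^2 ≤ m.alpha g * (m.rho g i)^3 := by
      rw [m.rho_pow_three hα.le, mul_add, mul_inv_cancel_left₀ hα.ne']
      linarith
    have hρ : 0 ≤ m.rho g i := Real.rpow_nonneg (by positivity) _
    have h2 : (m.rho g i * m.h i)^3 ≤ (2 / (N:ℝ))^3 := by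
      refine pow_le_pow_left₀ (by positivity) ?_ 3
      rw [hm i hi]
      exact div_le_div_of_nonneg_right (m.sigma_le_two g) hN.le
    calc (m.h i)^3 * (m.avg g i)^2 ≤ (m.h i)^3 * (m.alpha g * (m.rho g i)^3) := by gcongr
      _ = m.alpha g * (m.rho g i * m.h i)^3 := by ring
      _ ≤ m.alpha g * (2 / (N:ℝ))^3 := by gcongr
      _ = _ := by ring
  calc _ ≤ ∑ _ ∈ Finset.range N, 8 * m.alpha g / (N:ℝ)^3 := Finset.sum_le_sum hterm
    _ = _ := by
      rw [Finset.sum_const, Finset.card_range, nsmul_eq_mul]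
      field_simp

end Mesh

namespace H1

lemma isPrimitive (u : H1) : IsPrimitive u.val u.dval := ⟨u.dval_int, u.ftc⟩

lemma memLp_dval (u : H1) : MemLp u.dval 2 unitMeasure :=
  memLp_two_of_sq u.dval_meas u.dval_sq_int

lemma memLp_val (u : H1) : MemLp u.val ⊤ unitMeasure :=
  memLp_top_of_continuousOn u.isPrimitive.continuousOn

/-- The difference of two functions in `H¹(0,1)`. -/
def sub (u w : H1) : H1 where
  val t := u.val t - w.val t
  dval t := u.dval t - w.dval t
  dval_meas := u.dval_meas.sub w.dval_meas
  dval_int := u.dval_int.sub w.dval_int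
  dval_sq_int := intervalIntegrable_iff_integrable.2 (u.memLp_dval.sub w.memLp_dval).integrable_sq
  ftc := (u.isPrimitive.sub w.isPrimitive).2

end H1

namespace Mesh

variable {N : ℕ} (m : Mesh N)

/-- The slope of the nodal interpolant of `u` on the element of index `i`. -/
def slope (u : H1) (i : ℕ) : ℝ := (u.val (m.x (i+1)) - u.val (m.x i)) / m.h i

/-- The derivative of the nodal interpolant of `u`. -/
def interpDeriv (u : H1) (t : ℝ) : ℝ :=
  ∑ i ∈ Finset.range N, (Set.Ioo (m.x i) (m.x (i+1))).indicator (fun _ => m.slope u i) t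

lemma interpDeriv_eq (u : H1) {i : ℕ} (hi : i < N) {t : ℝ}
    (ht : t ∈ Set.Ioo (m.x i) (m.x (i+1))) : m.interpDeriv u t = m.slope u i := by
  rw [interpDeriv, Finset.sum_eq_single i, Set.indicator_of_mem ht]
  · intro j hj hji
    have hj := Finset.mem_range.1 hj
    refine Set.indicator_of_notMem (fun htj => ?_) _
    rcases hji.lt_or_gt with h | h
    · exact absurd (htj.2.trans_le (m.x_le_x h hi.le)) ht.1.not_gt
    · exact absurd (ht.2.trans_le (m.x_le_x h hj.le)) htj.1.not_gt
  · exact fun h => absurd (Finset.mem_range.2 hi) h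

lemma memLp_interpDeriv (u : H1) : MemLp (m.interpDeriv u) 2 unitMeasure := by
  unfold interpDeriv
  exact memLp_finsetSum _ fun i _ => (memLp_const _).indicator measurableSet_Ioo

lemma measurable_interpDeriv (u : H1) : Measurable (m.interpDeriv u) := by
  unfold interpDeriv
  exact Finset.measurable_fun_sum _ fun i _ => measurable_const.indicator measurableSet_Ioo

/-- The nodal interpolant of `u`, for `u` vanishing at `0`. -/
def interp (u : H1) : H1 where
  val x := ∫ t in (0:ℝ)..x, m.interpDeriv u t
  dval := m.interpDeriv u
  dval_meas := m.measurable_interpDeriv u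
  dval_int := intervalIntegrable_iff_integrable.2
    ((m.memLp_interpDeriv u).integrable one_le_two)
  dval_sq_int := intervalIntegrable_iff_integrable.2 (m.memLp_interpDeriv u).integrable_sq
  ftc x _ := by simp

lemma isPL_interp (u : H1) : m.IsPL (m.interp u) :=
  fun i hi => ⟨m.slope u i, fun _ ht => m.interpDeriv_eq u hi ht⟩

lemma interp_val_x {u : H1} (hu : u.val 0 = 0) {i : ℕ} (hi : i ≤ N) :
    (m.interp u).val (m.x i) = u.val (m.x i) := by
  induction i with
  | zero => rw [m.x_zero, hu]; simp [interp]
  | succ i ih =>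
    have hlt : i < N := hi
    have h := (m.interp u).isPrimitive.integral_eq (m.x_mem hlt.le) (m.x_mem hi)
    rw [intervalIntegral.integral_congr_Ioo_of_le (f := (m.interp u).dval) (m.x_mono i hlt).le
      (g := fun _ => m.slope u i) fun t ht => m.interpDeriv_eq u hlt ht,
      intervalIntegral.integral_const, ih hlt.le, smul_eq_mul, slope] at h
    have hh : m.x (i+1) - m.x i ≠ 0 := (m.h_pos hlt).ne'
    rw [Mesh.h, mul_div_cancel₀ _ hh] at h
    linarith

end Mesh

namespace Coeffs

variable (P : Coeffs) {f : ℝ → ℝ}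

lemma isPrimitive_a : IsPrimitive P.a P.a' := ⟨P.a'_int, P.ftc_a⟩

lemma isPrimitive_b : IsPrimitive P.b P.b' := ⟨P.b'_int, P.ftc_b⟩

lemma integrable_B (u v : H1) : IntervalIntegrable (fun t =>
    P.a t * u.dval t * v.dval t + P.b t * u.dval t * v.val t + P.c t * u.val t * v.val t)
    volume 0 1 := by
  have ha := memLp_top_of_continuousOn P.isPrimitive_a.continuousOn
  have hb := memLp_top_of_continuousOn P.isPrimitive_b.continuousOn
  have hc := memLp_top_of_ae_le P.c_meas P.c_bdd
  have hau : MemLp (fun t => P.a t * u.dval t) 2 unitMeasure := u.memLp_dval.mul' ha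
  have hbu : MemLp (fun t => P.b t * u.dval t) 2 unitMeasure := u.memLp_dval.mul' hb
  have hcu : MemLp (fun t => P.c t * u.val t) ⊤ unitMeasure := u.memLp_val.mul' hc
  have hbuv : MemLp (fun t => P.b t * u.dval t * v.val t) 2 unitMeasure := v.memLp_val.mul' hbu
  have hcuv : MemLp (fun t => P.c t * u.val t * v.val t) ⊤ unitMeasure := v.memLp_val.mul' hcu
  exact intervalIntegrable_iff_integrable.2 (((hau.integrable_mul v.memLp_dval).add
    (hbuv.integrable one_le_two)).add (hcuv.integrable le_top))

lemma B_sub_left (u w v : H1) : P.B (u.sub w) v = P.B u v - P.B w v := by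
  rw [B, B, B, ← intervalIntegral.integral_sub (P.integrable_B u v) (P.integrable_B w v)]
  refine intervalIntegral.integral_congr fun t _ => ?_
  simp only [H1.sub]
  ring

lemma B_sub_right (u v w : H1) : P.B u (v.sub w) = P.B u v - P.B u w := by
  rw [B, B, B, ← intervalIntegral.integral_sub (P.integrable_B u v) (P.integrable_B u w)]
  refine intervalIntegral.integral_congr fun t _ => ?_
  simp only [H1.sub]
  ring

/-- Coercivity of the bilinear form on `H¹₀(0,1)`. -/
lemma coercive {e : H1} (h0 : e.val 0 = 0) (h1 : e.val 1 = 0) :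
    P.a0 * ∫ t in (0:ℝ)..1, (e.dval t)^2 ≤ P.B e e := by
  have hconv := P.isPrimitive_b.mul (e.isPrimitive.mul e.isPrimitive)
  have hzero := hconv.integral_eq (p := 0) (q := 1) ⟨le_rfl, zero_le_one⟩ ⟨zero_le_one, le_rfl⟩
  simp only [h0, h1, mul_zero, sub_zero] at hzero
  have hB : P.B e e = P.B e e - (1/2) * ∫ t in (0:ℝ)..1, (P.b' t * (e.val t * e.val t) +
      P.b t * (e.dval t * e.val t + e.val t * e.dval t)) := by
    rw [hzero, mul_zero, sub_zero]
  rw [hB, ← intervalIntegral.integral_const_mul, ← intervalIntegral.integral_const_mul,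
    B, ← intervalIntegral.integral_sub (P.integrable_B e e) (hconv.1.const_mul _)]
  refine intervalIntegral.integral_mono_ae_restrict zero_le_one (e.dval_sq_int.const_mul _)
    ((P.integrable_B e e).sub (hconv.1.const_mul _)) ?_
  rw [← Measure.restrict_congr_set (Ioo_ae_eq_Icc (a := (0:ℝ)) (b := 1))]
  filter_upwards [P.cb_nonneg, ae_restrict_mem measurableSet_Ioo] with t ht htm
  have ha := P.a_lb t (Set.Ioo_subset_Icc_self htm)
  nlinarith [mul_nonneg (sub_nonneg.2 ha) (sq_nonneg (e.dval t)),
    mul_nonneg ht (sq_nonneg (e.val t))]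

lemma memLp_res (hf : MemL2 f) (w : H1) : MemLp (P.res f w) 2 unitMeasure := by
  have ha := memLp_top_of_ae_le P.a'_meas P.a'_bdd
  have hb := memLp_top_of_continuousOn P.isPrimitive_b.continuousOn
  have hc := memLp_top_of_ae_le P.c_meas P.c_bdd
  have hau : MemLp (fun t => P.a' t * w.dval t) 2 unitMeasure := w.memLp_dval.mul' ha
  have hbu : MemLp (fun t => P.b t * w.dval t) 2 unitMeasure := w.memLp_dval.mul' hb
  have hcu : MemLp (fun t => P.c t * w.val t) ⊤ unitMeasure := w.memLp_val.mul' hc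
  exact (((memLp_two_of_sq hf.1 hf.2).add hau).sub hbu).sub (hcu.mono_exponent le_top)

lemma integrable_ip (hf : MemL2 f) (v : H1) :
    IntervalIntegrable (fun t => f t * v.val t) volume 0 1 := by
  have h : MemLp (fun t => f t * v.val t) 2 unitMeasure :=
    v.memLp_val.mul' (memLp_two_of_sq hf.1 hf.2)
  exact intervalIntegrable_iff_integrable.2 (h.integrable one_le_two)

lemma integrable_res_mul (hf : MemL2 f) (w v : H1) :
    IntervalIntegrable (fun t => P.res f w t * v.val t) volume 0 1 := by
  have h : MemLp (fun t => P.res f w t * v.val t) 2 unitMeasure :=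
    v.memLp_val.mul' (P.memLp_res hf w)
  exact intervalIntegrable_iff_integrable.2 (h.integrable one_le_two)

/-- Elementwise integration by parts: the defect of a piecewise linear function, tested with a
function vanishing at the mesh points, is given by the residual. -/
lemma ip_sub_B_eq (hf : MemL2 f) {N : ℕ} (m : Mesh N) {w v : H1} (hw : m.IsPL w)
    (hv : ∀ i ≤ N, v.val (m.x i) = 0) :
    ip f v - P.B w v = ∫ t in (0:ℝ)..1, P.res f w t * v.val t := by
  rw [ip, B, ← intervalIntegral.integral_sub (integrable_ip hf v) (P.integrable_B w v),
    ← m.sum_integral ((integrable_ip hf v).sub (P.integrable_B w v)),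
    ← m.sum_integral (P.integrable_res_mul hf w v)]
  refine Finset.sum_congr rfl fun i hi => ?_
  have hi := Finset.mem_range.1 hi
  obtain ⟨s, hs⟩ := hw i hi
  have hav := P.isPrimitive_a.mul v.isPrimitive
  have hp := m.x_mem hi.le
  have hq := m.x_mem hi
  have hzero := hav.integral_eq hp hq
  rw [hv i hi.le, hv (i+1) hi, mul_zero, mul_zero, sub_zero] at hzero
  rw [← sub_eq_zero, ← intervalIntegral.integral_sub
    (intervalIntegrable_of_subinterval ((integrable_ip hf v).sub (P.integrable_B w v)) hp hq)
    (intervalIntegrable_of_subinterval (P.integrable_res_mul hf w v) hp hq),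
    intervalIntegral.integral_congr_Ioo_of_le (m.x_mono i hi).le
      (g := fun t => -s * (P.a' t * v.val t + P.a t * v.dval t)),
    intervalIntegral.integral_const_mul, hzero, mul_zero]
  intro t ht
  simp only [res, hs t ht]
  ring

/-- The a posteriori error bound by the residual. -/
lemma integral_error_sq_le (hf : MemL2 f) {u : H1} (hu : P.IsWeakSolution f u) {N : ℕ}
    (m : Mesh N) {uh : H1} (huh : P.IsFESolution f m uh) :
    P.a0^2 * ∫ t in (0:ℝ)..1, (u.dval t - uh.dval t)^2 ≤
      ∑ i ∈ Finset.range N, (m.h i)^3 * (m.avg (P.res f uh) i)^2 := by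
  obtain ⟨hu0, hu1, hu⟩ := hu
  obtain ⟨huh0, huh1, hPL, huh⟩ := huh
  set r := P.res f uh with hr
  have hr2 : IntervalIntegrable (fun t => (r t)^2) volume 0 1 :=
    intervalIntegrable_iff_integrable.2 (P.memLp_res hf uh).integrable_sq
  set e := u.sub uh with he
  have he0 : e.val 0 = 0 := by simp [he, H1.sub, hu0, huh0]
  have he1 : e.val 1 = 0 := by simp [he, H1.sub, hu1, huh1]
  set w := m.interp e with hw
  have hwx : ∀ i ≤ N, w.val (m.x i) = e.val (m.x i) := fun i hi => m.interp_val_x he0 hi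
  have hw0 : w.val 0 = 0 := by
    have := hwx 0 (Nat.zero_le N)
    rwa [m.x_zero, he0] at this
  have hw1 : w.val 1 = 0 := by
    have := hwx N le_rfl
    rwa [m.x_last, he1] at this
  set v := e.sub w with hv
  have hvx : ∀ i ≤ N, v.val (m.x i) = 0 := fun i hi => sub_eq_zero.2 (hwx i hi).symm
  have hv0 : v.val 0 = 0 := by simp [hv, H1.sub, he0, hw0]
  have hv1 : v.val 1 = 0 := by simp [hv, H1.sub, he1, hw1]
  have horth : P.B e w = 0 := by
    rw [he, P.B_sub_left, hu w hw0 hw1, huh w hw0 hw1 (m.isPL_interp e), sub_self]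
  have hBe : P.B e e = ∫ t in (0:ℝ)..1, r t * v.val t := by
    have hright : P.B e v = P.B e e - P.B e w := P.B_sub_right e e w
    have hleft : P.B e v = P.B u v - P.B uh v := P.B_sub_left u uh v
    rw [← P.ip_sub_B_eq hf m hPL hvx, ← hu v hv0 hv1, ← hleft, hright, horth, sub_zero]
  have hv2 : IntervalIntegrable (fun t => (v.val t)^2) volume 0 1 := by
    have := v.isPrimitive.continuousOn.pow 2
    rw [← Set.uIcc_of_le (zero_le_one (α := ℝ))] at this
    exact this.intervalIntegrable
  have helem : ∀ i ∈ Finset.range N, 2 * P.a0 * ∫ t in (m.x i)..(m.x (i+1)), r t * v.val t ≤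
      (m.h i)^3 * (m.avg r i)^2 + P.a0^2 * ∫ t in (m.x i)..(m.x (i+1)), (e.dval t)^2 := by
    intro i hi
    have hi := Finset.mem_range.1 hi
    have hp := m.x_mem hi.le
    have hq := m.x_mem hi
    have hlt := m.x_mono i hi
    have hh := m.h_pos hi
    have hd2 : ∫ t in (m.x i)..(m.x (i+1)), (v.dval t)^2 ≤
        ∫ t in (m.x i)..(m.x (i+1)), (e.dval t)^2 := by
      have hmean := integral_sub_mean_sq_eq hlt
        (intervalIntegrable_of_subinterval e.dval_int hp hq)
        (intervalIntegrable_of_subinterval e.dval_sq_int hp hq)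
      have hnn : 0 ≤ (∫ t in (m.x i)..(m.x (i+1)), e.dval t)^2 / (m.x (i+1) - m.x i) :=
        div_nonneg (sq_nonneg _) hh.le
      rw [intervalIntegral.integral_congr_Ioo_of_le hlt.le
        (g := fun t => (e.dval t - (∫ s in (m.x i)..(m.x (i+1)), e.dval s) /
          (m.x (i+1) - m.x i))^2), hmean]
      · linarith
      · intro t ht
        simp only [hv, hw, H1.sub, Mesh.interp, m.interpDeriv_eq e hi ht, Mesh.slope, Mesh.h]
        rw [← e.isPrimitive.integral_eq hp hq]
    have hpoin : ∫ t in (m.x i)..(m.x (i+1)), (v.val t)^2 ≤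
        (m.h i)^2 * ∫ t in (m.x i)..(m.x (i+1)), (e.dval t)^2 :=
      (v.isPrimitive.integral_sq_le v.dval_sq_int hp hq hlt.le (hvx i hi.le)).trans
        (mul_le_mul_of_nonneg_left hd2 (sq_nonneg _))
    have hir := intervalIntegrable_of_subinterval hr2 hp hq
    have hiv := intervalIntegrable_of_subinterval hv2 hp hq
    have hirv := intervalIntegrable_of_subinterval (P.integrable_res_mul hf uh v) hp hq
    have hyoung : ∫ t in (m.x i)..(m.x (i+1)), 2 * P.a0 * (r t * v.val t) ≤
        ∫ t in (m.x i)..(m.x (i+1)),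
          ((m.h i)^2 * (r t)^2 + P.a0^2 / (m.h i)^2 * (v.val t)^2) := by
      refine intervalIntegral.integral_mono_on hlt.le (hirv.const_mul _)
        ((hir.const_mul _).add (hiv.const_mul _)) fun t _ => ?_
      have hsq : (m.h i)^2 * (r t)^2 + P.a0^2 / (m.h i)^2 * (v.val t)^2 -
          2 * P.a0 * (r t * v.val t) = (m.h i * r t - P.a0 / m.h i * v.val t)^2 := by
        field_simp
        ring
      linarith [sq_nonneg (m.h i * r t - P.a0 / m.h i * v.val t)]
    rw [intervalIntegral.integral_const_mul, intervalIntegral.integral_add (hir.const_mul _)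
      (hiv.const_mul _), intervalIntegral.integral_const_mul,
      intervalIntegral.integral_const_mul, ← m.h_mul_avg_sq r hi] at hyoung
    calc _ ≤ _ := hyoung
      _ ≤ (m.h i)^2 * (m.h i * (m.avg r i)^2) + P.a0^2 / (m.h i)^2 *
          ((m.h i)^2 * ∫ t in (m.x i)..(m.x (i+1)), (e.dval t)^2) := by gcongr
      _ = _ := by field_simp
  have hsum := Finset.sum_le_sum helem
  rw [← Finset.mul_sum, Finset.sum_add_distrib, ← Finset.mul_sum,
    m.sum_integral (P.integrable_res_mul hf uh v), m.sum_integral e.dval_sq_int, ← hBe] at hsum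
  have hco := mul_le_mul_of_nonneg_left (P.coercive he0 he1) (mul_pos two_pos P.a0_pos).le
  change P.a0^2 * ∫ t in (0:ℝ)..1, (e.dval t)^2 ≤ _
  linarith

end Coeffs

/-- convergence for equidistributing meshes (Theorem 2.1, error bound). -/
theorem statement0 (P : Coeffs) :
    ∃ C : ℝ, 0 < C ∧
      ∀ f : ℝ → ℝ, MemL2 f →
      ∀ u : H1, P.IsWeakSolution f u →
      ∀ (N : ℕ) (m : Mesh N) (uh : H1), P.IsFESolution f m uh →
        m.IsEquidistributing (P.res f uh) →
        L2 (fun t => u.dval t - uh.dval t) ≤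
          C * Real.sqrt (m.alpha (P.res f uh)) / (N:ℝ) := by
  have ha0 := P.a0_pos
  refine ⟨3 / P.a0, by positivity, fun f hf u hu N m uh huh hm => ?_⟩
  have hα := m.alpha_nonneg (P.res f uh)
  have hle := (P.integral_error_sq_le hf hu m huh).trans hm.sum_le
  have hN : (0:ℝ) < N := Nat.cast_pos.2 m.pos
  refine Real.sqrt_le_iff.2 ⟨by positivity, ?_⟩
  rw [div_pow, mul_pow, Real.sq_sqrt hα, div_pow, div_mul_eq_mul_div, div_div,
    le_div_iff₀ (by positivity)]
  rw [le_div_iff₀ (by positivity)] at hle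
  linarith

end EquidMesh
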